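/- Let R be a ring and N an R-module. Suppose f: A → B is a retract of f': A' → B' in the arrow category of R-modules: there are R-linear maps i_A: A → A', i_B: B → B', r_A: A' → A, r_B: B' → B with i_B ∘ f = f' ∘ i_A, r_B ∘ f' = f ∘ r_A, r_A ∘ i_A = id_A, and r_B ∘ i_B = id_B. If f' is injective and Ext^i_R(coker f', N) = 0 for all i ≥ 1, then f is injective and Ext^i_R(coker f, N) = 0 for all i ≥ 1. (The class of monomorphisms whose cokernel lies in the Ext-orthogonality class of N is retract-closed.) -/

import Mathlib

/-!
Taking cokernels is functorial on the arrow category, so it sends a retract `f` of `f'` to a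
retract `coker f` of `coker f'`. The functor `Ext^i(-, N)` preserves retracts, and a retract of a
zero object is zero. Since `i_A` has a left inverse, `i_B ∘ f = f' ∘ i_A` is injective,
hence so is `f`.
-/

open CategoryTheory

universe u

namespace Paper

/-- `Ext^i_R(X, N) = 0` for all `i ≥ 1`, where `Ext` denotes the right derived functors of
`Hom` computed in the abelian category of `R`-modules. -/
def ExtVanishes (R : Type u) [Ring R] (X N : Type u)
    [AddCommGroup X] [Module R X] [AddCommGroup N] [Module R N] : Prop :=
  ∀ i : ℕ, 1 ≤ i →
    Limits.IsZero (((Ext ℤ (ModuleCat.{u} R) i).obj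
      (Opposite.op (ModuleCat.of R X))).obj (ModuleCat.of R N))

theorem injective_of_comp_eq_comp {α β α' β' : Type*} {f : α → β} {f' : α' → β'}
    {i : α → α'} {j : β → β'} (h : j ∘ f = f' ∘ i)
    (hf' : Function.Injective f') (hi : Function.Injective i) : Function.Injective f :=
  .of_comp (f := j) (h ▸ hf'.comp hi)

theorem range_le_comap_range_of_comp_eq_comp {R A B A' B' : Type*} [Semiring R]
    [AddCommMonoid A] [Module R A] [AddCommMonoid B] [Module R B]
    [AddCommMonoid A'] [Module R A'] [AddCommMonoid B'] [Module R B']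
    {f : A →ₗ[R] B} {f' : A' →ₗ[R] B'} {i : A →ₗ[R] A'} {j : B →ₗ[R] B'}
    (h : j ∘ₗ f = f' ∘ₗ i) :
    LinearMap.range f ≤ (LinearMap.range f').comap j := by
  rw [← Submodule.map_le_iff_le_comap, ← LinearMap.range_comp, h]
  exact LinearMap.range_comp_le_range i f'

theorem mapQ_comp_mapQ_eq_id {R B B' : Type*} [Ring R]
    [AddCommGroup B] [Module R B] [AddCommGroup B'] [Module R B']
    {p : Submodule R B} {p' : Submodule R B'}
    {i : B →ₗ[R] B'} {r : B' →ₗ[R] B} (hi : p ≤ p'.comap i) (hr : p' ≤ p.comap r)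
    (hri : r ∘ₗ i = LinearMap.id) :
    p'.mapQ p r hr ∘ₗ p.mapQ p' i hi = LinearMap.id := by
  rw [← Submodule.mapQ_comp p p' p i r hi hr]
  simp only [hri, Submodule.mapQ_id]

theorem isZero_Ext_of_retract {S : Type*} [Ring S] {C : Type*} [Category* C] [Abelian C]
    [Linear S C] [EnoughProjectives C] {X X' Y : C} {n : ℕ} (h : Retract X X')
    (hX' : Limits.IsZero (((Ext S C n).obj (Opposite.op X')).obj Y)) :
    Limits.IsZero (((Ext S C n).obj (Opposite.op X)).obj Y) :=
  hX'.of_mono (h.op.map ((Ext S C n).flip.obj Y)).i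

theorem ExtVanishes.of_comp_eq_id {R : Type u} [Ring R] {X X' N : Type u}
    [AddCommGroup X] [Module R X] [AddCommGroup X'] [Module R X'] [AddCommGroup N] [Module R N]
    {i : X →ₗ[R] X'} {r : X' →ₗ[R] X} (hri : r ∘ₗ i = LinearMap.id)
    (hX' : ExtVanishes R X' N) : ExtVanishes R X N := by
  let hX : Retract (ModuleCat.of R X) (ModuleCat.of R X') :=
    { i := ModuleCat.ofHom i
      r := ModuleCat.ofHom r
      retract := by rw [← ModuleCat.ofHom_comp, hri, ModuleCat.ofHom_id] }
  exact fun n hn => isZero_Ext_of_retract hX (hX' n hn)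

/-- The class of monomorphisms whose cokernel lies in the Ext-orthogonality
class of `N` is closed under retracts in the arrow category. -/
theorem extVanishes_cokernel_retract
    {R : Type u} [Ring R] (N : Type u) [AddCommGroup N] [Module R N]
    {A B A' B' : Type u} [AddCommGroup A] [Module R A] [AddCommGroup B] [Module R B]
    [AddCommGroup A'] [Module R A'] [AddCommGroup B'] [Module R B']
    (f : A →ₗ[R] B) (f' : A' →ₗ[R] B')
    (iA : A →ₗ[R] A') (iB : B →ₗ[R] B') (rA : A' →ₗ[R] A) (rB : B' →ₗ[R] B)
    (hi : iB ∘ₗ f = f' ∘ₗ iA) (hr : rB ∘ₗ f' = f ∘ₗ rA)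
    (hrA : rA ∘ₗ iA = LinearMap.id) (hrB : rB ∘ₗ iB = LinearMap.id)
    (hf' : Function.Injective f')
    (hE' : ExtVanishes R (B' ⧸ LinearMap.range f') N) :
    Function.Injective f ∧ ExtVanishes R (B ⧸ LinearMap.range f) N := by
  constructor
  · have hiA : Function.Injective iA :=
      Function.LeftInverse.injective (LinearMap.congr_fun hrA)
    exact injective_of_comp_eq_comp (congrArg DFunLike.coe hi) hf' hiA
  · have hrange : LinearMap.range f ≤ (LinearMap.range f').comap iB :=
      range_le_comap_range_of_comp_eq_comp hi
    have hrange' : LinearMap.range f' ≤ (LinearMap.range f).comap rB :=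
      range_le_comap_range_of_comp_eq_comp hr
    exact hE'.of_comp_eq_id (mapQ_comp_mapQ_eq_id hrange hrange' hrB)

end Paper
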